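/- Let H be a complex Hilbert space and let u : ℂ → H be holomorphic with u(k) ≠ 0 for all k ∈ ℂ. Set h(k) := ‖u(k)‖² and φ(k) := u(k)/‖u(k)‖. Then for every k ∈ ℂ, (1/4)·Δ(log h)(k) = −Im⟨∂_{k₁}φ(k), ∂_{k₂}φ(k)⟩, where Δ = ∂²_{k₁} + ∂²_{k₂} in the identification ℂ ≅ ℝ², k = k₁ + ik₂, and the inner product ⟨·,·⟩ is complex linear in its first argument. -/

import Mathlib

open Complex

noncomputable section

/-- The Laplacian `Δ = ∂²_{k₁} + ∂²_{k₂}` of a function on `ℂ ≅ ℝ²`. -/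
def lap (f : ℂ → ℝ) : ℂ → ℝ := fun z =>
  fderiv ℝ (fun w => fderiv ℝ f w 1) z 1 +
  fderiv ℝ (fun w => fderiv ℝ f w Complex.I) z Complex.I

/-- The inner product taken complex *linear in the first* argument and conjugate linear in
the second (Mathlib's `inner` is linear in the second argument, so we swap). -/
def innerFirst {H : Type*} [NormedAddCommGroup H] [InnerProductSpace ℂ H] (x y : H) : ℂ :=
  inner (𝕜 := ℂ) y x

/-! Both sides are computed from the part `p` of `u'` orthogonal to `u`. Differentiating
`φ = u / ‖u‖` in the direction `e` removes the real part of the component of `e u'` along `u`,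
leaving `‖u‖⁻¹ (e p + i s u)` with `s` real; hence `Im⟨∂₁φ, ∂₂φ⟩ = -‖p‖² / ‖u‖²`. On the other side,
`Δ‖u‖² = 4‖u'‖²` because `u` is harmonic, and `|∇‖u‖²|² = 4|⟨u, u'⟩|²`, so
`Δ log ‖u‖² = 4(‖u'‖² / ‖u‖² - |⟨u, u'⟩|² / ‖u‖⁴) = 4‖p‖² / ‖u‖²` by Pythagoras. -/

open ComplexConjugate InnerProductSpace Topology UniformSpace

section RealCalculus

variable {E F : Type*} [NormedAddCommGroup E] [NormedSpace ℝ E]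

theorem differentiableAt_fderiv_apply [NormedAddCommGroup F] [NormedSpace ℝ F] {f : E → F} {x : E}
    (hf : ContDiffAt ℝ 2 f x) (e : E) : DifferentiableAt ℝ (fun y => fderiv ℝ f y e) x :=
  ((hf.fderiv_right (m := 1) le_rfl).differentiableAt one_ne_zero).clm_apply
    (differentiableAt_const e)

theorem fderiv_fderiv_log_apply {f : E → ℝ} {x : E} (hf : ContDiffAt ℝ 2 f x) (hx : f x ≠ 0)
    (e e' : E) :
    fderiv ℝ (fun y => fderiv ℝ (fun w => Real.log (f w)) y e) x e' =
      fderiv ℝ (fun y => fderiv ℝ f y e) x e' / f x -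
        fderiv ℝ f x e * fderiv ℝ f x e' / f x ^ 2 := by
  have hlog : (fun y => fderiv ℝ (fun w => Real.log (f w)) y e) =ᶠ[𝓝 x]
      fun y => (f y)⁻¹ * fderiv ℝ f y e := by
    filter_upwards [hf.eventually (by simp), hf.continuousAt.eventually_ne hx] with y hy hy0
    simp [fderiv.log (hy.differentiableAt two_ne_zero) hy0]
  have hinv := (hasDerivAt_inv hx).comp_hasFDerivAt x
    (hf.differentiableAt two_ne_zero).hasFDerivAt
  have hmul := hinv.mul (differentiableAt_fderiv_apply hf e).hasFDerivAt
  rw [hlog.fderiv_eq]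
  refine (DFunLike.congr_fun hmul.fderiv e').trans ?_
  simp only [Function.comp_apply, add_apply, smul_apply, smul_eq_mul]
  field_simp
  ring

variable [NormedAddCommGroup F] [InnerProductSpace ℝ F] {f : E → F} {x : E}

theorem fderiv_norm_sq_comp_apply (hf : DifferentiableAt ℝ f x) (e : E) :
    fderiv ℝ (fun y => ‖f y‖ ^ 2) x e = 2 * ⟪f x, fderiv ℝ f x e⟫_ℝ := by
  simpa using DFunLike.congr_fun hf.hasFDerivAt.norm_sq.fderiv e

theorem fderiv_fderiv_norm_sq_comp_apply (hf : ContDiffAt ℝ 2 f x) (e e' : E) :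
    fderiv ℝ (fun y => fderiv ℝ (fun w => ‖f w‖ ^ 2) y e) x e' =
      2 * (⟪f x, fderiv ℝ (fun y => fderiv ℝ f y e) x e'⟫_ℝ +
        ⟪fderiv ℝ f x e', fderiv ℝ f x e⟫_ℝ) := by
  have hfirst : (fun y => fderiv ℝ (fun w => ‖f w‖ ^ 2) y e) =ᶠ[𝓝 x]
      fun y => 2 * ⟪f y, fderiv ℝ f y e⟫_ℝ := by
    filter_upwards [hf.eventually (by simp)] with y hy
    exact fderiv_norm_sq_comp_apply (hy.differentiableAt two_ne_zero) e
  have hf₁ := hf.differentiableAt two_ne_zero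
  have hf₂ := differentiableAt_fderiv_apply hf e
  rw [hfirst.fderiv_eq, fderiv_const_mul (hf₁.inner ℝ hf₂), smul_apply,
    fderiv_inner_apply ℝ hf₁ hf₂, smul_eq_mul]

theorem fderiv_norm_inv_smul_apply (hf : DifferentiableAt ℝ f x) (hx : f x ≠ 0) (e : E) :
    fderiv ℝ (fun y => ‖f y‖⁻¹ • f y) x e =
      ‖f x‖⁻¹ • (fderiv ℝ f x e - (⟪f x, fderiv ℝ f x e⟫_ℝ / ‖f x‖ ^ 2) • f x) := by
  have hn : ‖f x‖ ≠ 0 := norm_ne_zero_iff.2 hx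
  have hnorm := hf.hasFDerivAt.norm_sq.sqrt (pow_ne_zero 2 hn)
  simp only [Real.sqrt_sq (norm_nonneg _)] at hnorm
  have hsmul := ((hasDerivAt_inv hn).comp_hasFDerivAt x hnorm).smul hf.hasFDerivAt
  refine (DFunLike.congr_fun hsmul.fderiv e).trans ?_
  simp only [Function.comp_apply, add_apply, smul_apply, ContinuousLinearMap.smulRight_apply,
    ContinuousLinearMap.comp_apply, innerSL_apply_apply, nsmul_eq_mul, smul_eq_mul]
  match_scalars
  · ring
  · field_simp

end RealCalculus

theorem lap_log {f : ℂ → ℝ} {z : ℂ} (hf : ContDiffAt ℝ 2 f z) (hz : f z ≠ 0) :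
    lap (fun w => Real.log (f w)) z =
      lap f z / f z - (fderiv ℝ f z 1 ^ 2 + fderiv ℝ f z I ^ 2) / f z ^ 2 := by
  simp only [lap, fderiv_fderiv_log_apply hf hz]
  ring

section Projection

theorem norm_sq_starProjection_orthogonal_singleton {𝕜 V : Type*} [RCLike 𝕜]
    [NormedAddCommGroup V] [InnerProductSpace 𝕜 V] (x v : V) :
    ‖(𝕜 ∙ x)ᗮ.starProjection v‖ ^ 2 = ‖v‖ ^ 2 - ‖⟪x, v⟫_𝕜‖ ^ 2 / ‖x‖ ^ 2 := by
  have hspan : ‖(𝕜 ∙ x).starProjection v‖ ^ 2 = ‖⟪x, v⟫_𝕜‖ ^ 2 / ‖x‖ ^ 2 := by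
    rcases eq_or_ne x 0 with rfl | hx
    · simp
    have hn : ‖x‖ ≠ 0 := norm_ne_zero_iff.2 hx
    rw [Submodule.starProjection_singleton, norm_smul, norm_div, RCLike.norm_ofReal,
      abs_of_nonneg (sq_nonneg _)]
    field_simp
  rw [← hspan, Submodule.norm_sq_eq_add_norm_sq_starProjection v (𝕜 ∙ x), add_sub_cancel_left]

variable {H : Type*} [NormedAddCommGroup H] [InnerProductSpace ℂ H]

/-- The Fubini–Study length squared of `dπ_x(v)`, where `π : H \ {0} → ℙ(H)` sends `x` to the line
`ℂ ∙ x`; both curvatures are multiples of it at `x = u(k)`, `v = u'(k)`. The metric is normalized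
so that `π` is a Riemannian submersion on the unit sphere. For `x = 0` the value is `0`. -/
def fubiniStudySq (x v : H) : ℝ :=
  ‖(ℂ ∙ x)ᗮ.starProjection v‖ ^ 2 / ‖x‖ ^ 2

theorem fubiniStudySq_eq (x v : H) :
    fubiniStudySq x v = ‖v‖ ^ 2 / ‖x‖ ^ 2 - ‖⟪x, v⟫_ℂ‖ ^ 2 / ‖x‖ ^ 4 := by
  rw [fubiniStudySq, norm_sq_starProjection_orthogonal_singleton]
  ring

theorem smul_sub_re_inner_smul_eq (x v : H) (e : ℂ) :
    e • v - ((⟪x, e • v⟫_ℂ).re / ‖x‖ ^ 2) • x =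
      e • (ℂ ∙ x)ᗮ.starProjection v + (((e * ⟪x, v⟫_ℂ).im / ‖x‖ ^ 2 : ℝ) * I) • x := by
  rw [Submodule.starProjection_orthogonal_val, Submodule.starProjection_singleton,
    inner_smul_right, ← Complex.coe_smul]
  match_scalars
  · ring
  · have hre_im := Complex.re_add_im (e * ⟪x, v⟫_ℂ)
    linear_combination (-1 / (‖x‖ : ℂ) ^ 2) * hre_im

theorem im_inner_smul_starProjection_orthogonal_add_smul (x v : H) (a b : ℂ) (s t : ℝ) :
    (⟪a • (ℂ ∙ x)ᗮ.starProjection v + (s * I) • x,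
      b • (ℂ ∙ x)ᗮ.starProjection v + (t * I) • x⟫_ℂ).im =
      (conj a * b).im * ‖(ℂ ∙ x)ᗮ.starProjection v‖ ^ 2 := by
  have hp : (ℂ ∙ x)ᗮ.starProjection v ∈ (ℂ ∙ x)ᗮ := Submodule.starProjection_apply_mem _ v
  have hxp := Submodule.mem_orthogonal_singleton_iff_inner_right.1 hp
  have hpx := Submodule.mem_orthogonal_singleton_iff_inner_left.1 hp
  have hinner : ⟪a • (ℂ ∙ x)ᗮ.starProjection v + (s * I) • x,
      b • (ℂ ∙ x)ᗮ.starProjection v + (t * I) • x⟫_ℂ =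
      conj a * b * (‖(ℂ ∙ x)ᗮ.starProjection v‖ ^ 2 : ℝ) + (s * t * ‖x‖ ^ 2 : ℝ) := by
    simp only [inner_add_left, inner_add_right, inner_smul_left, inner_smul_right, hxp, hpx,
      inner_self_eq_norm_sq_to_K, Complex.coe_algebraMap, map_mul, conj_ofReal, conj_I]
    push_cast
    linear_combination (-(s * t * ‖x‖ ^ 2) : ℂ) * I_mul_I
  rw [hinner, add_im, ofReal_im, add_zero, im_mul_ofReal]

end Projection

section Holomorphic

variable {H : Type*} [NormedAddCommGroup H] [InnerProductSpace ℂ H] {u : ℂ → H} {z : ℂ}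

theorem fderiv_real_eq_smul_deriv (hu : DifferentiableAt ℂ u z) (e : ℂ) :
    fderiv ℝ u z e = e • deriv u z := by
  rw [hu.fderiv_restrictScalars ℝ, ContinuousLinearMap.coe_restrictScalars', fderiv_eq_smul_deriv]

theorem fderiv_fderiv_real_eq_smul_deriv_deriv [CompleteSpace H] (hu : AnalyticAt ℂ u z)
    (e e' : ℂ) :
    fderiv ℝ (fun w => fderiv ℝ u w e) z e' = (e' * e) • deriv (deriv u) z := by
  have hfirst : (fun w => fderiv ℝ u w e) =ᶠ[𝓝 z] fun w => e • deriv u w := by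
    filter_upwards [hu.eventually_analyticAt] with w hw
    exact fderiv_real_eq_smul_deriv hw.differentiableAt e
  have hu' : DifferentiableAt ℂ (deriv u) z := hu.deriv.differentiableAt
  rw [hfirst.fderiv_eq, fderiv_real_eq_smul_deriv (hu'.fun_const_smul e),
    deriv_fun_const_smul e hu', smul_smul]

theorem fderiv_norm_sq_eq_re_mul_inner_deriv (hu : DifferentiableAt ℂ u z) (e : ℂ) :
    fderiv ℝ (fun w => ‖u w‖ ^ 2) z e = 2 * (e * ⟪u z, deriv u z⟫_ℂ).re := by
  let : InnerProductSpace ℝ H := InnerProductSpace.complexToReal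
  rw [fderiv_norm_sq_comp_apply (hu.restrictScalars ℝ), fderiv_real_eq_smul_deriv hu,
    ← inner_smul_right (u z) (deriv u z) e]
  rfl

theorem lap_norm_sq [CompleteSpace H] (hu : AnalyticAt ℂ u z) :
    lap (fun w => ‖u w‖ ^ 2) z = 4 * ‖deriv u z‖ ^ 2 := by
  let : InnerProductSpace ℝ H := InnerProductSpace.complexToReal
  have hC : ContDiffAt ℝ 2 u z := hu.contDiffAt.restrict_scalars ℝ
  have hharm : ((1 : ℂ) * 1) • deriv (deriv u) z + (I * I) • deriv (deriv u) z = 0 := by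
    simp
  have hinner := congrArg (fun y => ⟪u z, y⟫_ℝ) hharm
  simp only [inner_add_right, inner_zero_right] at hinner
  simp only [lap, fderiv_fderiv_norm_sq_comp_apply hC,
    fderiv_fderiv_real_eq_smul_deriv_deriv hu, fderiv_real_eq_smul_deriv hu.differentiableAt,
    real_inner_self_eq_norm_sq, norm_smul, norm_one, norm_I]
  linear_combination 2 * hinner

theorem lap_log_norm_sq_of_analyticAt [CompleteSpace H] (hu : AnalyticAt ℂ u z) (hz : u z ≠ 0) :
    lap (fun w => Real.log (‖u w‖ ^ 2)) z = 4 * fubiniStudySq (u z) (deriv u z) := by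
  let : InnerProductSpace ℝ H := InnerProductSpace.complexToReal
  have hC : ContDiffAt ℝ 2 (fun w => ‖u w‖ ^ 2) z :=
    (hu.contDiffAt.restrict_scalars ℝ).norm_sq ℝ
  have hgrad : fderiv ℝ (fun w => ‖u w‖ ^ 2) z 1 ^ 2 + fderiv ℝ (fun w => ‖u w‖ ^ 2) z I ^ 2 =
      4 * ‖⟪u z, deriv u z⟫_ℂ‖ ^ 2 := by
    simp only [fderiv_norm_sq_eq_re_mul_inner_deriv hu.differentiableAt, one_mul, I_mul_re,
      Complex.sq_norm, Complex.normSq_apply]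
    ring
  rw [lap_log hC (pow_ne_zero 2 (norm_ne_zero_iff.2 hz)), hgrad, lap_norm_sq hu, fubiniStudySq_eq]
  ring

theorem lap_log_norm_sq (hu : ∀ᶠ w in 𝓝 z, DifferentiableAt ℂ u w) (hz : u z ≠ 0) :
    lap (fun w => Real.log (‖u w‖ ^ 2)) z = 4 * fubiniStudySq (u z) (deriv u z) := by
  -- In general `u'` is holomorphic only into the completion, which has the same inner products.
  let ι : H →L[ℂ] Completion H := Completion.toComplL
  have hιu : AnalyticAt ℂ (fun w => ι (u w)) z :=
    Complex.analyticAt_iff_eventually_differentiableAt.2 <|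
      hu.mono fun w hw => ι.differentiableAt.comp w hw
  have hderiv : deriv (fun w => ι (u w)) z = ι (deriv u z) :=
    (ι.hasFDerivAt.comp_hasDerivAt z hu.self_of_nhds.hasDerivAt).deriv
  have hι0 : ι (u z) ≠ 0 := by simpa [ι] using hz
  have hlap := lap_log_norm_sq_of_analyticAt hιu hι0
  rw [hderiv] at hlap
  simpa [fubiniStudySq_eq, ι] using hlap

theorem fderiv_norm_inv_smul_eq_starProjection_add (hu : DifferentiableAt ℂ u z) (hz : u z ≠ 0)
    (e : ℂ) :
    fderiv ℝ (fun w => ‖u w‖⁻¹ • u w) z e =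
      ‖u z‖⁻¹ • (e • (ℂ ∙ u z)ᗮ.starProjection (deriv u z) +
        (((e * ⟪u z, deriv u z⟫_ℂ).im / ‖u z‖ ^ 2 : ℝ) * I) • u z) := by
  let : InnerProductSpace ℝ H := InnerProductSpace.complexToReal
  rw [fderiv_norm_inv_smul_apply (hu.restrictScalars ℝ) hz, fderiv_real_eq_smul_deriv hu,
    ← smul_sub_re_inner_smul_eq]
  rfl

theorem im_inner_fderiv_norm_inv_smul (hu : DifferentiableAt ℂ u z) (hz : u z ≠ 0) (e e' : ℂ) :
    (⟪fderiv ℝ (fun w => ‖u w‖⁻¹ • u w) z e, fderiv ℝ (fun w => ‖u w‖⁻¹ • u w) z e'⟫_ℂ).im =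
      (conj e * e').im * fubiniStudySq (u z) (deriv u z) := by
  rw [fderiv_norm_inv_smul_eq_starProjection_add hu hz,
    fderiv_norm_inv_smul_eq_starProjection_add hu hz, ← Complex.coe_smul, ← Complex.coe_smul,
    inner_smul_left, inner_smul_right, conj_ofReal, im_ofReal_mul, im_ofReal_mul,
    im_inner_smul_starProjection_orthogonal_add_smul, fubiniStudySq]
  ring

end Holomorphic

theorem stmt15_general {H : Type*} [NormedAddCommGroup H] [InnerProductSpace ℂ H]
    {u : ℂ → H} {k : ℂ} (hu : ∀ᶠ w in 𝓝 k, DifferentiableAt ℂ u w) (hk : u k ≠ 0) :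
    (1 / 4) * lap (fun w => Real.log (‖u w‖ ^ 2)) k =
      -(innerFirst
          (fderiv ℝ (fun w => ‖u w‖⁻¹ • u w) k 1)
          (fderiv ℝ (fun w => ‖u w‖⁻¹ • u w) k Complex.I)).im := by
  rw [lap_log_norm_sq hu hk, innerFirst, im_inner_fderiv_norm_inv_smul hu.self_of_nhds hk]
  simp

theorem stmt15 {H : Type*} [NormedAddCommGroup H] [InnerProductSpace ℂ H] [CompleteSpace H]
    (u : ℂ → H) (hu : Differentiable ℂ u) (hne : ∀ k : ℂ, u k ≠ 0) :
    ∀ k : ℂ,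
      (1 / 4) * lap (fun w => Real.log (‖u w‖ ^ 2)) k =
        -(innerFirst
            (fderiv ℝ (fun w => ‖u w‖⁻¹ • u w) k 1)
            (fderiv ℝ (fun w => ‖u w‖⁻¹ • u w) k Complex.I)).im := fun k =>
  stmt15_general (Filter.Eventually.of_forall hu) (hne k)

end
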